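/- arXiv:1611.06454 — 4 statements merged into one kernel-verified Lean document; each statement's English description precedes it below -/
import Mathlib

section
/- The algebra 𝔷₃ degenerates to 𝔑₂(0): the structure λ with table e₁e₁ = e₃, e₁e₂ = e₄, e₂e₂ = −e₄ lies in the closure of the GL(V)-orbit of the structure μ with table e₁e₁ = e₃, e₁e₃ = e₄, e₂e₂ = e₄, e₃e₁ = 2e₄. -/
noncomputable section

/-- `V = ℂ⁴`. -/
abbrev V : Type := Fin 4 → ℂ

/-- The standard basis vectors `e₁, e₂, e₃, e₄` of `V` (indexed by `0, 1, 2, 3`). -/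
def e (i : Fin 4) : V := Pi.single i 1

/-- The `GL(V)`-orbit `O(μ)` of an algebra structure `μ` on `V`, for the action
`(g • μ)(x, y) = g (μ (g⁻¹ x) (g⁻¹ y))`. -/
def orbit (μ : V →L[ℂ] V →L[ℂ] V) : Set (V →L[ℂ] V →L[ℂ] V) :=
  {ν | ∃ g : V ≃L[ℂ] V, ∀ x y : V, ν x y = g (μ (g.symm x) (g.symm y))}

/-!
Reading `μ` in a basis `E` of `V` gives a point of the orbit of `μ`, and an algebra structure
depends continuously on its multiplication table. So it suffices to find bases `E t`, `t ≠ 0`, in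
which the multiplication table of `𝔷₃` tends to that of `𝔑₂(0)` as `t → 0`. The basis
`E₁ = t e₁ - 2 e₂`, `E₂ = e₂ + t⁻¹ e₃`, `E₃ = t² e₃ + 4 e₄`, `E₄ = -e₄` has exactly the products
of `𝔑₂(0)`, except for `E₁E₃ = -t³ E₄` and `E₃E₁ = -2t³ E₄`.
-/

open Filter Topology

section MultiplicationTable

variable (𝕜 ι F : Type*) [NontriviallyNormedField 𝕜] [CompleteSpace 𝕜] [Fintype ι] [DecidableEq ι]
  [NormedAddCommGroup F] [NormedSpace 𝕜 F]

/-- The multiplication table of a bilinear map on `ι → 𝕜`, that is, its values on pairs of standard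
basis vectors, as a linear homeomorphism between bilinear maps and tables. -/
def multiplicationTable : ((ι → 𝕜) →L[𝕜] (ι → 𝕜) →L[𝕜] F) ≃L[𝕜] (ι → ι → F) :=
  (ContinuousLinearEquiv.piRing ι).trans
    (ContinuousLinearEquiv.piCongrRight fun _ => ContinuousLinearEquiv.piRing ι)

end MultiplicationTable

section Orbit

variable {μ ν : V →L[ℂ] V →L[ℂ] V}

theorem multiplicationTable_apply {F : Type*} [NormedAddCommGroup F] [NormedSpace ℂ F]
    (μ : V →L[ℂ] V →L[ℂ] F) (i j : Fin 4) :
    multiplicationTable ℂ (Fin 4) F μ i j = μ (e i) (e j) :=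
  rfl

theorem linearCombination_e {M : Type*} [AddCommMonoid M] [Module ℂ M] (E : Fin 4 → M) (i : Fin 4) :
    Fintype.linearCombination ℂ E (e i) = E i := by
  simp [e]

theorem mem_orbit_of_basis (b : Module.Basis (Fin 4) ℂ V)
    (hν : ∀ i j, μ (b i) (b j) = ∑ k, ν (e i) (e j) k • b k) : ν ∈ orbit μ := by
  let g : V ≃L[ℂ] V := b.equivFun.toContinuousLinearEquiv
  have g_symm_apply (v : V) : g.symm v = ∑ k, v k • b k := b.equivFun_symm_apply v
  have g_symm_e (i : Fin 4) : g.symm (e i) = b i := by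
    rw [g_symm_apply, ← Fintype.linearCombination_apply, linearCombination_e]
  have hν_eq : ν = g.arrowCongr (g.arrowCongr g) μ := by
    apply (multiplicationTable ℂ (Fin 4) V).injective
    funext i j
    simp only [multiplicationTable_apply, ContinuousLinearEquiv.arrowCongr_apply]
    rw [← g.symm_apply_eq, g_symm_apply, g_symm_e, g_symm_e, hν]
  exact ⟨g, fun x y => by simp only [hν_eq, ContinuousLinearEquiv.arrowCongr_apply]⟩

theorem mem_orbit_of_linearIndependent {E : Fin 4 → V} (hE : LinearIndependent ℂ E)
    (hν : ∀ i j, μ (E i) (E j) = ∑ k, ν (e i) (e j) k • E k) : ν ∈ orbit μ :=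
  mem_orbit_of_basis (basisOfLinearIndependentOfCardEqFinrank hE (by simp)) (by simpa using hν)

theorem mem_closure_orbit_of_tendsto {α : Type*} {l : Filter α} [l.NeBot]
    {E : α → Fin 4 → V} {c : α → Fin 4 → Fin 4 → V}
    (hE : ∀ᶠ t in l, LinearIndependent ℂ (E t))
    (hc : ∀ᶠ t in l, ∀ i j, μ (E t i) (E t j) = ∑ k, c t i j k • E t k)
    (hlim : Tendsto c l (𝓝 fun i j => ν (e i) (e j))) : ν ∈ closure (orbit μ) := by
  let table := multiplicationTable ℂ (Fin 4) V
  have hlim_symm : Tendsto (fun t => table.symm (c t)) l (𝓝 ν) := by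
    rw [← table.symm_apply_apply ν]
    exact (table.symm.continuous.tendsto _).comp hlim
  refine mem_closure_of_tendsto hlim_symm ?_
  filter_upwards [hE, hc] with t hEt hct
  refine mem_orbit_of_linearIndependent hEt fun i j => ?_
  rw [hct, ← multiplicationTable_apply (table.symm (c t)), table.apply_symm_apply]

end Orbit

section Degeneration

/-- The multiplication table of `𝔷₃`. -/
def z3Table : Fin 4 → Fin 4 → V :=
  ![![e 2, 0, e 3, 0],
    ![0, e 3, 0, 0],
    ![(2 : ℂ) • e 3, 0, 0, 0],
    ![0, 0, 0, 0]]

/-- The parametrized basis of `V` along which `𝔷₃` degenerates to `𝔑₂(0)` as `t → 0`. It is a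
basis only for `t ≠ 0`. -/
def degenerationBasis (t : ℂ) : Fin 4 → V :=
  ![t • e 0 - (2 : ℂ) • e 1, e 1 + t⁻¹ • e 2, t ^ 2 • e 2 + (4 : ℂ) • e 3, -e 3]

/-- The multiplication table of `𝔷₃` in `degenerationBasis t`, each entry being the coordinate
vector of a product in that basis. At `t = 0` it is the table of `𝔑₂(0)`. -/
def degenerationTable (t : ℂ) : Fin 4 → Fin 4 → V :=
  ![![e 2, e 3, -t ^ 3 • e 3, 0],
    ![0, -e 3, 0, 0],
    ![(-2 * t ^ 3) • e 3, 0, 0, 0],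
    ![0, 0, 0, 0]]

variable {t : ℂ}

theorem det_degenerationBasis : (Matrix.of (degenerationBasis t)).det = -t ^ 3 := by
  have hupper : (Matrix.of (degenerationBasis t)).BlockTriangular id := by
    intro i j hij
    fin_cases i <;> fin_cases j <;> simp_all [degenerationBasis, e]
  rw [Matrix.det_of_isUpperTriangular hupper]
  simp [Fin.prod_univ_four, degenerationBasis, e, ← pow_succ']

theorem linearIndependent_degenerationBasis (ht : t ≠ 0) :
    LinearIndependent ℂ (degenerationBasis t) :=
  Matrix.linearIndependent_rows_of_det_ne_zero (A := Matrix.of (degenerationBasis t))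
    (by simpa [det_degenerationBasis] using ht)

theorem apply_degenerationBasis {μ : V →L[ℂ] V →L[ℂ] V}
    (hμ : ∀ i j, μ (e i) (e j) = z3Table i j) (ht : t ≠ 0) (i j : Fin 4) :
    μ (degenerationBasis t i) (degenerationBasis t j) =
      ∑ k, degenerationTable t i j k • degenerationBasis t k := by
  rw [← Fintype.linearCombination_apply]
  fin_cases i <;> fin_cases j <;>
    simp only [degenerationTable, Fin.zero_eta, Fin.mk_one, Fin.reduceFinMk, Matrix.cons_val,
      map_smul, map_neg, map_zero, linearCombination_e] <;>
    simp only [degenerationBasis, Matrix.cons_val, map_add, map_sub, map_neg, map_smul,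
      add_apply, sub_apply, neg_apply, smul_apply, hμ, z3Table] <;>
    match_scalars <;> field_simp <;> norm_num

theorem continuous_degenerationTable : Continuous degenerationTable := by
  unfold degenerationTable
  fun_prop

end Degeneration

/-- 𝔷₃ degenerates to 𝔑₂(0). -/
theorem stmt8 (μ lam : V →L[ℂ] V →L[ℂ] V)
    (hμ : ∀ i j : Fin 4, μ (e i) (e j) =
    (![
      ![e 2, 0, e 3, 0],
      ![0, e 3, 0, 0],
      ![(2 : ℂ) • e 3, 0, 0, 0],
      ![0, 0, 0, 0]
     ] : Fin 4 → Fin 4 → V) i j)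
    (hlam : ∀ i j : Fin 4, lam (e i) (e j) =
    (![
      ![e 2, e 3, 0, 0],
      ![0, -e 3, 0, 0],
      ![0, 0, 0, 0],
      ![0, 0, 0, 0]
     ] : Fin 4 → Fin 4 → V) i j) :
    lam ∈ closure (orbit μ) := by
  have htable : degenerationTable 0 = fun i j => lam (e i) (e j) := by
    funext i j
    rw [hlam]
    fin_cases i <;> fin_cases j <;> simp [degenerationTable]
  have hlim : Tendsto degenerationTable (𝓝[≠] 0) (𝓝 fun i j => lam (e i) (e j)) := by
    rw [← htable]
    exact continuous_degenerationTable.continuousWithinAt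
  refine mem_closure_orbit_of_tendsto (E := degenerationBasis) ?_ ?_ hlim
  · filter_upwards [self_mem_nhdsWithin] with t ht using linearIndependent_degenerationBasis ht
  · filter_upwards [self_mem_nhdsWithin] with t ht using apply_degenerationBasis hμ ht
end
end

section
/- The algebra 𝔏₁₂ degenerates to 𝔏₁: the structure λ with table e₁e₂ = e₃, e₁e₃ = e₄, e₂e₁ = −e₃, e₃e₁ = −e₄ lies in the closure of the GL(V)-orbit of the structure μ with table e₁e₁ = e₄, e₁e₂ = −e₃, e₁e₃ = −e₄, e₂e₁ = e₃, e₃e₁ = e₄. -/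
noncomputable section

/-!
The sum `μ + lam` has the single nonzero product `e₁e₁ = e₄`. The diagonal map
`g = diag(-1, t, t, t)` carries `-lam` to `lam` and multiplies the product `e₁e₁ = e₄` by `t`, so
`g · μ = lam + t • (μ + lam)`, and this tends to `lam` as `t → 0`.
-/

theorem mem_closure_of_forall_add_smul_mem {R E : Type*} [Ring R] [TopologicalSpace R]
    [(nhdsWithin (0 : R) {0}ᶜ).NeBot] [AddCommGroup E] [Module R E] [TopologicalSpace E]
    [ContinuousAdd E] [ContinuousSMul R E] {s : Set E} {a v : E}
    (h : ∀ t : R, t ≠ 0 → a + t • v ∈ s) : a ∈ closure s := by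
  have line_continuous : Continuous fun t : R => a + t • v := by fun_prop
  have line_tendsto : Filter.Tendsto (fun t : R => a + t • v) (nhdsWithin 0 {0}ᶜ) (nhds a) := by
    simpa using (line_continuous.tendsto 0).mono_left nhdsWithin_le_nhds
  exact mem_closure_of_tendsto line_tendsto (eventually_mem_nhdsWithin.mono h)

theorem mem_orbit_of_forall_basis {ι : Type*} (b : Module.Basis ι ℂ V)
    {μ ν : V →L[ℂ] V →L[ℂ] V} (g : V ≃L[ℂ] V)
    (h : ∀ i j, ν (g (b i)) (g (b j)) = g (μ (b i) (b j))) : ν ∈ orbit μ := by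
  have map_mul : (ν.toLinearMap₁₂).compl₁₂ (g : V →ₗ[ℂ] V) (g : V →ₗ[ℂ] V) =
      (μ.toLinearMap₁₂).compr₂ (g : V →ₗ[ℂ] V) :=
    LinearMap.ext_basis b b h
  refine ⟨g, fun x y => ?_⟩
  simpa using LinearMap.congr_fun₂ map_mul (g.symm x) (g.symm y)

section diagEquiv

variable {R ι : Type*} [CommSemiring R] [TopologicalSpace R] [ContinuousMul R]

/-- The diagonal automorphism of `ι → R` with diagonal entries `c`, by which multiplication tables
are rescaled; the entries are units so that the map is invertible by construction. -/
def diagEquiv (c : ι → Rˣ) : (ι → R) ≃L[R] (ι → R) :=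
  ContinuousLinearEquiv.piCongrRight fun i => ContinuousLinearEquiv.smulLeft (c i)

theorem diagEquiv_apply (c : ι → Rˣ) (x : ι → R) (i : ι) : diagEquiv c x i = c i * x i :=
  rfl

theorem diagEquiv_single [DecidableEq ι] (c : ι → Rˣ) (i : ι) (a : R) :
    diagEquiv c (Pi.single i a) = (c i : R) • Pi.single i a := by
  ext j
  rcases eq_or_ne j i with rfl | hij <;> simp [diagEquiv_apply, *]

end diagEquiv

theorem diagEquiv_e (c : Fin 4 → ℂˣ) (i : Fin 4) : diagEquiv c (e i) = (c i : ℂ) • e i :=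
  diagEquiv_single c i 1

theorem mem_orbit_of_diagEquiv {μ ν : V →L[ℂ] V →L[ℂ] V} (c : Fin 4 → ℂˣ)
    (h : ∀ i j, (c i * c j : ℂ) • ν (e i) (e j) = diagEquiv c (μ (e i) (e j))) :
    ν ∈ orbit μ := by
  refine mem_orbit_of_forall_basis (Pi.basisFun ℂ (Fin 4)) (diagEquiv c) fun i j => ?_
  have basisFun_eq_e (k : Fin 4) : Pi.basisFun ℂ (Fin 4) k = e k := Pi.basisFun_apply ℂ (Fin 4) k
  simp only [basisFun_eq_e, ← h, diagEquiv_e, map_smul, smul_apply, smul_smul, mul_comm]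

/-- 𝔏₁₂ degenerates to 𝔏₁. -/
theorem stmt17 (μ lam : V →L[ℂ] V →L[ℂ] V)
    (hμ : ∀ i j : Fin 4, μ (e i) (e j) =
    (![
      ![e 3, -e 2, -e 3, 0],
      ![e 2, 0, 0, 0],
      ![e 3, 0, 0, 0],
      ![0, 0, 0, 0]
     ] : Fin 4 → Fin 4 → V) i j)
    (hlam : ∀ i j : Fin 4, lam (e i) (e j) =
    (![
      ![0, e 2, e 3, 0],
      ![-e 2, 0, 0, 0],
      ![-e 3, 0, 0, 0],
      ![0, 0, 0, 0]
     ] : Fin 4 → Fin 4 → V) i j) :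
    lam ∈ closure (orbit μ) := by
  have add_e (i j : Fin 4) :
      (μ + lam) (e i) (e j) = if i = 0 ∧ j = 0 then e 3 else 0 := by
    simp only [add_apply, hμ, hlam]
    fin_cases i <;> fin_cases j <;> simp
  refine mem_closure_of_forall_add_smul_mem (R := ℂ) (v := μ + lam) fun t ht => ?_
  let u : ℂˣ := Units.mk0 t ht
  refine mem_orbit_of_diagEquiv ![-1, u, u, u] fun i j => ?_
  rw [add_apply, add_apply, smul_apply, smul_apply, add_e, hlam, hμ]
  fin_cases i <;> fin_cases j <;> simp [diagEquiv_e, u]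
end
end

section
/- The family 𝔑₂(*) degenerates to 𝔑₁: the structure λ with table e₁e₂ = e₃, e₂e₁ = e₄, e₂e₂ = −e₃ lies in the closure of the union ⋃_{γ∈ℂ} O(μ_γ), where μ_γ is the structure with table e₁e₁ = e₃, e₁e₂ = e₄, e₂e₁ = −γe₃, e₂e₂ = −e₄. -/
noncomputable section

/-!
For `t ≠ 0`, put `λ_t = λ - t • β`, where the only nonzero product of `β` is `e₁e₁ = e₄`. The
monomial map `e₁ ↦ e₁, e₂ ↦ e₂, e₃ ↦ -t e₄, e₄ ↦ e₃` carries the table of `𝔑₂(t⁻¹)` to that of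
`λ_t`, so the punctured line `{λ_t}` lies in the union of the orbits, and `λ_t → λ` as `t → 0`.
-/

theorem mem_closure_of_forall_sub_smul_mem {𝕜 E : Type*} [NontriviallyNormedField 𝕜]
    [AddCommGroup E] [Module 𝕜 E] [TopologicalSpace E] [IsTopologicalAddGroup E]
    [ContinuousSMul 𝕜 E] {s : Set E} {a b : E} (h : ∀ t : 𝕜, t ≠ 0 → a - t • b ∈ s) :
    a ∈ closure s := by
  have hcont : Continuous fun t : 𝕜 => a - t • b := by fun_prop
  have hlim : Filter.Tendsto (fun t : 𝕜 => a - t • b) (nhdsWithin 0 {0}ᶜ) (nhds a) := by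
    simpa using (hcont.tendsto 0).mono_left nhdsWithin_le_nhds
  exact mem_closure_of_tendsto hlim (eventually_mem_nhdsWithin.mono h)

/-- The monomial transformation `Pi.single i 1 ↦ w (σ i) • Pi.single (σ i) 1` of `𝕜ⁿ`; the weights
are indexed by the target coordinate. -/
def monomialEquiv {𝕜 n : Type*} [NontriviallyNormedField 𝕜] [CompleteSpace 𝕜] [Finite n]
    (σ : Equiv.Perm n) (w : n → 𝕜ˣ) : (n → 𝕜) ≃L[𝕜] (n → 𝕜) :=
  ((Pi.basisFun 𝕜 n).equiv ((Pi.basisFun 𝕜 n).unitsSMul w) σ).toContinuousLinearEquiv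

theorem monomialEquiv_single {𝕜 n : Type*} [NontriviallyNormedField 𝕜] [CompleteSpace 𝕜]
    [Finite n] [DecidableEq n] (σ : Equiv.Perm n) (w : n → 𝕜ˣ) (i : n) :
    monomialEquiv σ w (Pi.single i 1) = (w (σ i) : 𝕜) • Pi.single (σ i) 1 := by
  have h := (Pi.basisFun 𝕜 n).equiv_apply i ((Pi.basisFun 𝕜 n).unitsSMul w) σ
  simpa [monomialEquiv, Module.Basis.unitsSMul_apply, Units.smul_def] using h

theorem continuousBilinear_ext_basis {𝕜 E F G ι κ : Type*} [NormedField 𝕜]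
    [AddCommGroup E] [Module 𝕜 E] [TopologicalSpace E]
    [AddCommGroup F] [Module 𝕜 F] [TopologicalSpace F]
    [AddCommGroup G] [Module 𝕜 G] [TopologicalSpace G] [IsTopologicalAddGroup G]
    [ContinuousConstSMul 𝕜 G]
    (b : Module.Basis ι 𝕜 E) (c : Module.Basis κ 𝕜 F) {B B' : E →L[𝕜] F →L[𝕜] G}
    (h : ∀ i j, B (b i) (c j) = B' (b i) (c j)) : B = B' :=
  ContinuousLinearMap.coe_injective <| b.ext fun i =>
    ContinuousLinearMap.coe_injective <| c.ext fun j => h i j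

theorem mem_orbit_of_map_basis_mul {μ ν : V →L[ℂ] V →L[ℂ] V} (g : V ≃L[ℂ] V)
    (h : ∀ i j, ν (g (e i)) (g (e j)) = g (μ (e i) (e j))) : ν ∈ orbit μ := by
  have hmul : ν.bilinearComp (g : V →L[ℂ] V) (g : V →L[ℂ] V) =
      ((g : V →L[ℂ] V).postcomp V).comp μ :=
    continuousBilinear_ext_basis (Pi.basisFun ℂ (Fin 4)) (Pi.basisFun ℂ (Fin 4)) fun i j => by
      simpa [e] using h i j
  refine ⟨g, fun x y => ?_⟩
  simpa using DFunLike.congr_fun (DFunLike.congr_fun hmul (g.symm x)) (g.symm y)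

/-- The algebra structure on `V` whose only nonzero product of basis vectors is
`e i * e j = e k`. -/
def singleProduct (i j k : Fin 4) : V →L[ℂ] V →L[ℂ] V :=
  (ContinuousLinearMap.proj (R := ℂ) (φ := fun _ : Fin 4 => ℂ) i).smulRight
    ((ContinuousLinearMap.proj (R := ℂ) (φ := fun _ : Fin 4 => ℂ) j).smulRight (e k))

theorem singleProduct_e (i j k a b : Fin 4) :
    singleProduct i j k (e a) (e b) = if a = i ∧ b = j then e k else 0 := by
  by_cases ha : a = i <;> by_cases hb : b = j <;> simp [singleProduct, e, *]

/-- The family `𝔑₂(*) = {𝔑₂(γ)}_{γ ∈ ℂ}` degenerates to `𝔑₁`: the structure of `𝔑₁`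
lies in the closure of the union of the orbits `O(𝔑₂(γ))`. -/
theorem stmt18 (μ : ℂ → (V →L[ℂ] V →L[ℂ] V)) (lam : V →L[ℂ] V →L[ℂ] V)
    (hμ : ∀ (γ : ℂ) (i j : Fin 4), μ γ (e i) (e j) =
    (![
      ![e 2, e 3, 0, 0],
      ![(-γ) • e 2, -e 3, 0, 0],
      ![0, 0, 0, 0],
      ![0, 0, 0, 0]
     ] : Fin 4 → Fin 4 → V) i j)
    (hlam : ∀ i j : Fin 4, lam (e i) (e j) =
    (![
      ![0, e 2, 0, 0],
      ![e 3, -e 2, 0, 0],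
      ![0, 0, 0, 0],
      ![0, 0, 0, 0]
     ] : Fin 4 → Fin 4 → V) i j) :
    lam ∈ closure (⋃ γ : ℂ, orbit (μ γ)) := by
  refine mem_closure_of_forall_sub_smul_mem (𝕜 := ℂ) (b := singleProduct 0 0 3) fun t ht => ?_
  let g : V ≃L[ℂ] V := monomialEquiv (Equiv.swap 2 3) ![1, 1, 1, -Units.mk0 t ht]
  have hg₀ : g (e 0) = e 0 := by simp [g, e, monomialEquiv_single, Equiv.swap_apply_of_ne_of_ne]
  have hg₁ : g (e 1) = e 1 := by simp [g, e, monomialEquiv_single, Equiv.swap_apply_of_ne_of_ne]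
  have hg₂ : g (e 2) = -t • e 3 := by simp [g, e, monomialEquiv_single]
  have hg₃ : g (e 3) = e 2 := by simp [g, e, monomialEquiv_single]
  refine Set.mem_iUnion.2 ⟨t⁻¹, mem_orbit_of_map_basis_mul g fun i j => ?_⟩
  fin_cases i <;> fin_cases j <;>
    simp [hg₀, hg₁, hg₂, hg₃, hμ, hlam, singleProduct_e, ht]
end
end

section
/- The algebra 𝔏₅ does not degenerate to 𝔏₂: the structure λ with table e₁e₁ = e₂, e₂e₁ = e₃, e₃e₁ = e₄ does not lie in the closure of the GL(V)-orbit of the structure μ with table e₁e₁ = e₃, e₂e₁ = e₃, e₂e₂ = e₄, e₃e₁ = e₄. (This follows since dim μ² = 2 < 3 = dim λ², where μ² denotes the span of all products μ(x, y).) -/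
noncomputable section

/-!
The dimension of `μ²`, the span of all products, cannot increase under degeneration. Indeed it is
constant on orbits, and it is lower semicontinuous in `μ`: linearly independent products of `μ`
remain linearly independent for all nearby structures. For 𝔏₅ it is `2`, since `μ²` is spanned by
`e₃, e₄`, and for 𝔏₂ it is `3`, since `λ²` is spanned by `e₂, e₃, e₄`.
-/

open Module Submodule

section ProductSpan

variable {𝕜 E F G : Type*} [NontriviallyNormedField 𝕜]
  [NormedAddCommGroup E] [NormedSpace 𝕜 E] [NormedAddCommGroup F] [NormedSpace 𝕜 F]
  [NormedAddCommGroup G] [NormedSpace 𝕜 G]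

/-- The span of all values `μ x y` of a continuous bilinear map; for an algebra structure `μ` this
is the subspace `μ²`. -/
def productSpan (μ : E →L[𝕜] F →L[𝕜] G) : Submodule 𝕜 G :=
  map₂ μ.toLinearMap₁₂ ⊤ ⊤

theorem apply_mem_productSpan (μ : E →L[𝕜] F →L[𝕜] G) (x : E) (y : F) :
    μ x y ∈ productSpan μ :=
  apply_mem_map₂ μ.toLinearMap₁₂ mem_top mem_top

theorem productSpan_le {μ : E →L[𝕜] F →L[𝕜] G} {p : Submodule 𝕜 G} :
    productSpan μ ≤ p ↔ ∀ x y, μ x y ∈ p := by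
  simp [productSpan, map₂_le]

theorem productSpan_eq_span_range_basis {ι κ : Type*} (μ : E →L[𝕜] F →L[𝕜] G)
    (b : Basis ι 𝕜 E) (c : Basis κ 𝕜 F) :
    productSpan μ = span 𝕜 (Set.range fun p : ι × κ ↦ μ (b p.1) (c p.2)) := by
  rw [productSpan, ← b.span_eq, ← c.span_eq, map₂_span_span, Set.image2_range]
  rfl

theorem finrank_productSpan_eq_card {ι κ τ : Type*} {μ : E →L[𝕜] F →L[𝕜] G}
    (b : Basis ι 𝕜 E) (c : Basis κ 𝕜 F) {d : τ → G} (hd : LinearIndependent 𝕜 d) (s : Finset τ)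
    (products_subset : ∀ i j, μ (b i) (c j) = 0 ∨ ∃ k ∈ s, μ (b i) (c j) = d k)
    (subset_products : ∀ k ∈ s, ∃ i j, μ (b i) (c j) = d k) :
    finrank 𝕜 (productSpan μ) = s.card := by
  have productSpan_eq : productSpan μ = span 𝕜 (Set.range fun k : s ↦ d k) := by
    apply le_antisymm
    · rw [productSpan_eq_span_range_basis μ b c, span_le]
      rintro _ ⟨⟨i, j⟩, rfl⟩
      rcases products_subset i j with h | ⟨k, hk, h⟩
      · simp [h]
      · simpa only [h] using subset_span (Set.mem_range_self (⟨k, hk⟩ : s))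
    · rw [span_le]
      rintro _ ⟨⟨k, hk⟩, rfl⟩
      obtain ⟨i, j, h⟩ := subset_products k hk
      simpa only [h, SetLike.mem_coe] using apply_mem_productSpan μ (b i) (c j)
  have d_indep : LinearIndependent 𝕜 fun k : s ↦ d k := hd.comp _ Subtype.val_injective
  rw [productSpan_eq, finrank_span_eq_card d_indep, Fintype.card_coe]

theorem productSpan_eq_map {E' F' G' : Type*} [NormedAddCommGroup E'] [NormedSpace 𝕜 E']
    [NormedAddCommGroup F'] [NormedSpace 𝕜 F'] [NormedAddCommGroup G'] [NormedSpace 𝕜 G']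
    {μ : E →L[𝕜] F →L[𝕜] G} {ν : E' →L[𝕜] F' →L[𝕜] G'} {f : E' → E} {h : F' → F}
    (hf : f.Surjective) (hh : h.Surjective) (g : G →ₗ[𝕜] G')
    (hν : ∀ x y, ν x y = g (μ (f x) (h y))) :
    productSpan ν = (productSpan μ).map g := by
  apply le_antisymm
  · refine productSpan_le.2 fun x y ↦ ?_
    rw [hν]
    exact mem_map_of_mem (apply_mem_productSpan μ _ _)
  · refine map_le_iff_le_comap.2 (productSpan_le.2 (hf.forall.2 fun x ↦ hh.forall.2 fun y ↦ ?_))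
    rw [mem_comap, ← hν]
    exact apply_mem_productSpan ν x y

theorem exists_linearIndependent_products [FiniteDimensional 𝕜 G] (μ : E →L[𝕜] F →L[𝕜] G) :
    ∃ (x : Fin (finrank 𝕜 (productSpan μ)) → E) (y : Fin (finrank 𝕜 (productSpan μ)) → F),
      LinearIndependent 𝕜 fun i ↦ μ (x i) (y i) := by
  rw [productSpan, map₂_eq_span_image2]
  obtain ⟨v, v_mem, -, v_indep⟩ := exists_fun_fin_finrank_span_eq 𝕜
    (Set.image2 (fun x y ↦ μ.toLinearMap₁₂ x y) (⊤ : Submodule 𝕜 E) (⊤ : Submodule 𝕜 F))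
  choose x _ y _ hxy using v_mem
  exact ⟨x, y, funext hxy ▸ v_indep⟩

theorem card_le_finrank_productSpan [FiniteDimensional 𝕜 G] {ι : Type*} [Fintype ι]
    {μ : E →L[𝕜] F →L[𝕜] G} {x : ι → E} {y : ι → F}
    (h : LinearIndependent 𝕜 fun i ↦ μ (x i) (y i)) :
    Fintype.card ι ≤ finrank 𝕜 (productSpan μ) := by
  rw [← finrank_span_eq_card h]
  refine finrank_mono (span_le.2 (Set.range_subset_iff.2 fun i ↦ ?_))
  exact apply_mem_productSpan μ (x i) (y i)

theorem lowerSemicontinuous_finrank_productSpan [CompleteSpace 𝕜] [FiniteDimensional 𝕜 G] :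
    LowerSemicontinuous fun μ : E →L[𝕜] F →L[𝕜] G ↦ finrank 𝕜 (productSpan μ) := by
  intro μ r hr
  obtain ⟨x, y, indep⟩ := exists_linearIndependent_products μ
  have products_continuous : Continuous fun (ν : E →L[𝕜] F →L[𝕜] G) i ↦ ν (x i) (y i) := by
    fun_prop
  filter_upwards [products_continuous.continuousAt.eventually indep.eventually] with ν ν_indep
  calc
    r < finrank 𝕜 (productSpan μ) := hr
    _ ≤ finrank 𝕜 (productSpan ν) := by simpa using card_le_finrank_productSpan ν_indep

end ProductSpan

theorem finrank_productSpan_of_mem_orbit {μ ν : V →L[ℂ] V →L[ℂ] V} (hν : ν ∈ orbit μ) :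
    finrank ℂ (productSpan ν) = finrank ℂ (productSpan μ) := by
  obtain ⟨g, hg⟩ := hν
  rw [productSpan_eq_map g.symm.surjective g.symm.surjective (g : V →ₗ[ℂ] V) hg]
  exact g.toLinearEquiv.finrank_map_eq _

theorem finrank_productSpan_le_of_mem_closure_orbit {μ ν : V →L[ℂ] V →L[ℂ] V}
    (hν : ν ∈ closure (orbit μ)) :
    finrank ℂ (productSpan ν) ≤ finrank ℂ (productSpan μ) :=
  closure_minimal (fun _ h ↦ (finrank_productSpan_of_mem_orbit h).le)
    (lowerSemicontinuous_finrank_productSpan.isClosed_preimage _) hν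

theorem coe_basisFun_eq_e : ⇑(Pi.basisFun ℂ (Fin 4)) = e :=
  funext (Pi.basisFun_apply ℂ (Fin 4))

theorem finrank_productSpan_eq_card_of_e {μ : V →L[ℂ] V →L[ℂ] V} (s : Finset (Fin 4))
    (products_subset : ∀ i j, μ (e i) (e j) = 0 ∨ ∃ k ∈ s, μ (e i) (e j) = e k)
    (subset_products : ∀ k ∈ s, ∃ i j, μ (e i) (e j) = e k) :
    finrank ℂ (productSpan μ) = s.card := by
  rw [← coe_basisFun_eq_e] at products_subset subset_products
  exact finrank_productSpan_eq_card _ _ (Pi.basisFun ℂ (Fin 4)).linearIndependent s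
    products_subset subset_products

/-- 𝔏₅ does not degenerate to 𝔏₂. -/
theorem stmt19 (μ lam : V →L[ℂ] V →L[ℂ] V)
    (hμ : ∀ i j : Fin 4, μ (e i) (e j) =
    (![
      ![e 2, 0, 0, 0],
      ![e 2, e 3, 0, 0],
      ![e 3, 0, 0, 0],
      ![0, 0, 0, 0]
     ] : Fin 4 → Fin 4 → V) i j)
    (hlam : ∀ i j : Fin 4, lam (e i) (e j) =
    (![
      ![e 1, 0, 0, 0],
      ![e 2, 0, 0, 0],
      ![e 3, 0, 0, 0],
      ![0, 0, 0, 0]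
     ] : Fin 4 → Fin 4 → V) i j) :
    lam ∉ closure (orbit μ) := by
  have finrank_μ : finrank ℂ (productSpan μ) = 2 := by
    refine finrank_productSpan_eq_card_of_e {2, 3} (fun i j ↦ ?_) ?_
    · fin_cases i <;> fin_cases j <;> simp [hμ]
    · simpa using ⟨⟨0, 0, hμ 0 0⟩, ⟨1, 1, hμ 1 1⟩⟩
  have finrank_lam : finrank ℂ (productSpan lam) = 3 := by
    refine finrank_productSpan_eq_card_of_e {1, 2, 3} (fun i j ↦ ?_) ?_
    · fin_cases i <;> fin_cases j <;> simp [hlam]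
    · simpa using ⟨⟨0, 0, hlam 0 0⟩, ⟨1, 0, hlam 1 0⟩, ⟨2, 0, hlam 2 0⟩⟩
  intro lam_mem
  have finrank_le := finrank_productSpan_le_of_mem_closure_orbit lam_mem
  omega
end
end
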